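/- Let s, t, r ∈ F with s ≠ 0, s^{q+1} ≠ 1, and r ≠ 0, and suppose a, b ∈ F satisfy a = (t·s^{q+1} − t^q)·r/(s^{q+1} − 1) and b = (t − t^q)·s^q·r^q/(s^{q+1} − 1). Then s is a root of the quadratic equation b·r·X² + (a^q·r − a·r^q)·X − (b·r)^q = 0. -/

import Mathlib

/-!
Write `x̄ = x ^ q`, an involutive ring endomorphism of `F`. After multiplication by `s * s̄ - 1`,
which the involution fixes, the coefficients of the quadratic become `c * s̄`, `-c * (s * s̄ + 1)`
and `c * s` with `c = (t - t̄) * r * r̄`, so it factors as `c * (X - s) * (s̄ * X - 1)`.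
-/

theorem exists_involutive_ringHom_eq_pow {F : Type*} [Field F] [Fintype F] {q : ℕ}
    (hF : Fintype.card F = q ^ 2) :
    ∃ σ : F →+* F, Function.Involutive σ ∧ ∀ x, σ x = x ^ q := by
  obtain ⟨p, _, n, hp, hcard⟩ := FiniteField.card' F
  have : Fact p.Prime := ⟨hp⟩
  obtain ⟨m, -, rfl⟩ : ∃ m ≤ (n : ℕ), q = p ^ m :=
    (Nat.dvd_prime_pow hp).mp (hcard ▸ hF ▸ dvd_pow_self q two_ne_zero)
  refine ⟨iterateFrobenius F p m, fun x ↦ ?_, iterateFrobenius_def p m⟩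
  rw [iterateFrobenius_def, iterateFrobenius_def, ← pow_mul, ← sq, ← hF, FiniteField.pow_card]

section Involution

variable {R : Type*} [CommRing R] {σ : R →+* R} {s t r a b : R}

theorem quadratic_mul_eq_mul_sub_mul_sub_one (hσ : Function.Involutive σ)
    (ha : a * (s * σ s - 1) = (t * (s * σ s) - σ t) * r)
    (hb : b * (s * σ s - 1) = (t - σ t) * σ s * σ r) (x : R) :
    (b * r * x ^ 2 + (σ a * r - a * σ r) * x - σ (b * r)) * (s * σ s - 1) =
      (t - σ t) * r * σ r * ((x - s) * (σ s * x - 1)) := by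
  have ha_conj : σ a * (σ s * s - 1) = (σ t * (σ s * s) - t) * σ r := by
    simpa only [map_mul, map_sub, map_one, hσ s, hσ t] using congrArg σ ha
  have hb_conj : σ b * (σ s * s - 1) = (σ t - t) * s * r := by
    simpa only [map_mul, map_sub, map_one, hσ s, hσ t, hσ r] using congrArg σ hb
  rw [map_mul]
  linear_combination (r * x ^ 2) * hb + (r * x) * ha_conj - (σ r * x) * ha - σ r * hb_conj

theorem s_is_root_of_quadratic_general (hσ : Function.Involutive σ)
    (hs : IsRegular (s * σ s - 1))
    (ha : a * (s * σ s - 1) = (t * (s * σ s) - σ t) * r)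
    (hb : b * (s * σ s - 1) = (t - σ t) * σ s * σ r) :
    b * r * s ^ 2 + (σ a * r - a * σ r) * s - σ (b * r) = 0 := by
  apply hs.right.mul_right_eq_zero_iff.mp
  rw [quadratic_mul_eq_mul_sub_mul_sub_one hσ ha hb, sub_self, zero_mul, mul_zero]

end Involution

/-- Let `q` be a prime power and `F` a finite field with `q^2` elements.
Let `s, t, r ∈ F` with `s ≠ 0`, `s^(q+1) ≠ 1`, `r ≠ 0`, and suppose `a, b ∈ F` satisfy
`a = (t·s^(q+1) − t^q)·r/(s^(q+1) − 1)` and `b = (t − t^q)·s^q·r^q/(s^(q+1) − 1)`.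
Then `s` is a root of `b·r·X² + (a^q·r − a·r^q)·X − (b·r)^q = 0`. -/
theorem s_is_root_of_quadratic (q : ℕ) (hq : IsPrimePow q) (F : Type*) [Field F] [Fintype F]
    (hF : Fintype.card F = q ^ 2) (s t r : F) (hs0 : s ≠ 0) (hs : s ^ (q + 1) ≠ 1)
    (hr : r ≠ 0) (a b : F)
    (hA : a = (t * s ^ (q + 1) - t ^ q) * r / (s ^ (q + 1) - 1))
    (hB : b = (t - t ^ q) * s ^ q * r ^ q / (s ^ (q + 1) - 1)) :
    b * r * s ^ 2 + (a ^ q * r - a * r ^ q) * s - (b * r) ^ q = 0 := by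
  obtain ⟨σ, hσ, hσ_pow⟩ := exists_involutive_ringHom_eq_pow hF
  have hN : s ^ (q + 1) - 1 ≠ 0 := sub_ne_zero.mpr hs
  rw [eq_div_iff hN] at hA hB
  simp only [pow_succ' s q, ← hσ_pow] at hN hA hB ⊢
  exact s_is_root_of_quadratic_general hσ (.of_ne_zero hN) hA hB
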